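/- For every τ in the complex upper half-plane, c(τ)² + 2·c(τ)·c(2τ)² = c(2τ); i.e., the functions u = c(τ) and v = c(2τ) satisfy the modular relation u² + 2uv² − v = 0. -/

import Mathlib

open Complex

/-- The nome `q = exp(2πiτ)`. -/
noncomputable def nome (τ : ℂ) : ℂ := Complex.exp (2 * Real.pi * I * τ)

/-- Ramanujan's cubic continued fraction, as an infinite product:
`c(τ) = q^{1/3} ∏_{n≥1} (1-q^{6n-1})(1-q^{6n-5})/(1-q^{6n-3})²`. -/
noncomputable def c (τ : ℂ) : ℂ :=
  Complex.exp (2 * Real.pi * I * τ / 3) *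
    ∏' n : ℕ,
      ((1 - nome τ ^ (6 * (n + 1) - 1)) * (1 - nome τ ^ (6 * (n + 1) - 5)) /
        (1 - nome τ ^ (6 * (n + 1) - 3)) ^ 2)

/-!
Write `θ(z | τ)` for Jacobi's theta function. The triple product identity turns the definition of
`c` into a quotient of theta values, `c(τ) = q^{1/3} θ(2τ + 1/2 | 6τ) / θ(1/2 | 6τ)`. The relation
between `c(τ)` and `c(2τ)` comes from the addition formula
`θ(z | τ) θ(w | τ) = θ(z+w | 2τ) θ(z-w | 2τ) + e^{πi(τ+2z)} θ(z+w+τ | 2τ) θ(z-w+τ | 2τ)`, which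
splits a double series over `ℤ²` according to the parity of the sum of the two indices: translating
`z` or `w` by `1/2` flips the sign of the second term or keeps it, so that sums and differences of
such translates isolate one term of the formula.
-/

open Filter Topology Finset

section QPochhammer

variable {R : Type*} [CommRing R]

/-- The finite `q`-Pochhammer symbol `(a; q)_n = (1 - a)(1 - aq)⋯(1 - aq^(n-1))`. -/
def qPochhammer (a q : R) (n : ℕ) : R := ∏ k ∈ range n, (1 - a * q ^ k)

@[simp]
theorem qPochhammer_zero (a q : R) : qPochhammer a q 0 = 1 := prod_range_zero _

theorem qPochhammer_succ (a q : R) (n : ℕ) :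
    qPochhammer a q (n + 1) = qPochhammer a q n * (1 - a * q ^ n) :=
  prod_range_succ _ n

theorem qPochhammer_succ' (a q : R) (n : ℕ) :
    qPochhammer a q (n + 1) = (1 - a) * qPochhammer (a * q) q n := by
  simp only [qPochhammer, prod_range_succ', pow_zero, mul_one, pow_succ', mul_assoc, mul_comm]

theorem qPochhammer_add (a q : R) (m n : ℕ) :
    qPochhammer a q (m + n) = qPochhammer a q m * qPochhammer (a * q ^ m) q n := by
  simp only [qPochhammer, prod_range_add, pow_add, mul_assoc]

theorem qPochhammer_reflect {K : Type*} [Field K] {b q : K} (hb : b ≠ 0) (hq : q ≠ 0) (n : ℕ) :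
    qPochhammer b q n =
      (-b) ^ n * q ^ n.choose 2 * qPochhammer (b⁻¹ * q / q ^ n) q n := by
  induction n with
  | zero => simp
  | succ n ih =>
    have harg : b⁻¹ * q / q ^ (n + 1) * q = b⁻¹ * q / q ^ n := by rw [pow_succ]; field_simp
    rw [qPochhammer_succ, ih, qPochhammer_succ', harg, Nat.choose_succ_succ', Nat.choose_one_right]
    field_simp
    ring

/-- The Gaussian binomial coefficient of `n` over `k` in the base `q`, defined by its Pascal
recurrence so that it makes sense in any ring; it vanishes for `k > n`. -/
def gaussBinom (q : R) : ℕ → ℕ → R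
  | _, 0 => 1
  | 0, _ + 1 => 0
  | n + 1, k + 1 => gaussBinom q n k + q ^ (k + 1) * gaussBinom q n (k + 1)

@[simp]
theorem gaussBinom_zero_right (q : R) (n : ℕ) : gaussBinom q n 0 = 1 := by
  rw [gaussBinom]

theorem gaussBinom_succ_succ (q : R) (n k : ℕ) :
    gaussBinom q (n + 1) (k + 1) = gaussBinom q n k + q ^ (k + 1) * gaussBinom q n (k + 1) := by
  rw [gaussBinom]

theorem gaussBinom_eq_zero_of_lt (q : R) {n k : ℕ} (h : n < k) : gaussBinom q n k = 0 := by
  induction n generalizing k with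
  | zero => obtain ⟨k, rfl⟩ := Nat.exists_eq_succ_of_ne_zero h.ne'; rw [gaussBinom]
  | succ n ih =>
    obtain ⟨k, rfl⟩ := Nat.exists_eq_succ_of_ne_zero (Nat.ne_zero_of_lt h)
    rw [gaussBinom_succ_succ, ih (by omega), ih (by omega), mul_zero, add_zero]

theorem gaussBinom_self (q : R) (n : ℕ) : gaussBinom q n n = 1 := by
  induction n with
  | zero => simp
  | succ n ih => rw [gaussBinom_succ_succ, ih, gaussBinom_eq_zero_of_lt q n.lt_succ_self]; simp

theorem gaussBinom_add_mul_qPochhammer (q : R) (m n : ℕ) :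
    gaussBinom q (m + n) m * (qPochhammer q q m * qPochhammer q q n) =
      qPochhammer q q (m + n) := by
  induction m generalizing n with
  | zero => simp
  | succ m ihm =>
    induction n with
    | zero => simp [gaussBinom_self]
    | succ n ihn =>
      have hm : gaussBinom q (m + 1 + n) m * (qPochhammer q q m * qPochhammer q q (n + 1)) =
          qPochhammer q q (m + 1 + n) := by
        simpa only [add_assoc, add_comm 1 n] using ihm (n + 1)
      rw [qPochhammer_succ] at hm ihn
      rw [← add_assoc, gaussBinom_succ_succ, qPochhammer_succ _ _ (m + 1 + n),
        qPochhammer_succ _ _ m, qPochhammer_succ _ _ n]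
      linear_combination (1 - q * q ^ m) * hm + q ^ (m + 1) * (1 - q * q ^ n) * ihn

theorem qPochhammer_eq_sum_gaussBinom (x q : R) (n : ℕ) :
    qPochhammer x q n = ∑ k ∈ range (n + 1), gaussBinom q n k * (q ^ k.choose 2 * (-x) ^ k) := by
  induction n generalizing x with
  | zero => simp
  | succ n ih =>
    have hlast : gaussBinom q n (n + 1) = 0 := gaussBinom_eq_zero_of_lt q n.lt_succ_self
    have hshift : qPochhammer (x * q) q n = 1 + ∑ k ∈ range (n + 1),
        gaussBinom q n (k + 1) * (q ^ (k + 1).choose 2 * (-(x * q)) ^ (k + 1)) := by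
      rw [ih, sum_range_succ', sum_range_succ _ n, hlast]
      simp [add_comm]
    have hterm (k : ℕ) : gaussBinom q (n + 1) (k + 1) * (q ^ (k + 1).choose 2 * (-x) ^ (k + 1)) =
        gaussBinom q n (k + 1) * (q ^ (k + 1).choose 2 * (-(x * q)) ^ (k + 1)) -
          x * (gaussBinom q n k * (q ^ k.choose 2 * (-(x * q)) ^ k)) := by
      rw [gaussBinom_succ_succ, Nat.choose_succ_succ', Nat.choose_one_right]
      ring
    rw [sum_range_succ', sum_congr rfl fun k _ => hterm k, sum_sub_distrib, ← mul_sum, ← ih,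
      qPochhammer_succ', gaussBinom_zero_right, Nat.choose_zero_succ]
    linear_combination hshift

end QPochhammer

section FiniteTripleProduct

theorem pow_mul_sq_pow_choose_two {M : Type*} [Monoid M] (q : M) (n : ℕ) :
    q ^ n * (q ^ 2) ^ n.choose 2 = q ^ n ^ 2 := by
  have hexp : n + 2 * n.choose 2 = n ^ 2 := by
    induction n with
    | zero => rfl
    | succ n ih => rw [Nat.choose_succ_succ', Nat.choose_one_right]; linarith
  rw [← pow_mul, ← pow_add, hexp]

/-- The central Gaussian binomial coefficient of `2n` over `n + j`, extended by zero to all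
integers `j`, so that sums over `-n ≤ j ≤ n` become sums over `ℤ`. -/
def centralGaussBinom {R : Type*} [CommRing R] (q : R) (n : ℕ) (j : ℤ) : R :=
  if j.natAbs ≤ n then gaussBinom q (2 * n) (n + j).toNat else 0

variable {K : Type*} [Field K]

theorem qPochhammer_mul_qPochhammer_eq_sum {q z : K} (hq : q ≠ 0) (hz : z ≠ 0) (n : ℕ) :
    qPochhammer (-(q * z)) (q ^ 2) n * qPochhammer (-(q / z)) (q ^ 2) n =
      ∑ k ∈ range (2 * n + 1),
        gaussBinom (q ^ 2) (2 * n) k * (q ^ ((k : ℤ) - n) ^ 2 * z ^ ((k : ℤ) - n)) := by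
  -- Reflecting the second factor merges the two symbols into a single one of length `2n`, which
  -- the `q`-binomial theorem expands.
  set a : K := (-(q / z))⁻¹ * q ^ 2 / (q ^ 2) ^ n with ha
  have hshift : a * (q ^ 2) ^ n = -(q * z) := by rw [ha]; field_simp
  have hreflect := qPochhammer_reflect (neg_ne_zero.2 (div_ne_zero hq hz)) (pow_ne_zero 2 hq) n
  have hadd := qPochhammer_add a (q ^ 2) n n
  rw [hshift, ← two_mul, qPochhammer_eq_sum_gaussBinom] at hadd
  rw [hreflect, mul_left_comm, mul_comm (qPochhammer _ _ _), ← hadd, mul_sum]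
  refine sum_congr rfl fun k _ => ?_
  have hn := pow_mul_sq_pow_choose_two q n
  have hk := pow_mul_sq_pow_choose_two q k
  have hexp : q ^ ((k : ℤ) - n) ^ 2 = q ^ n ^ 2 * q ^ k ^ 2 / (q ^ n) ^ (2 * k) := by
    rw [show ((k : ℤ) - n) ^ 2 = ((n ^ 2 : ℕ) + (k ^ 2 : ℕ) - (n * (2 * k) : ℕ) : ℤ) by
      push_cast; ring, zpow_sub₀ hq, zpow_add₀ hq]
    simp only [zpow_natCast, pow_mul]
  have hneg : -a = q * z / (q ^ n) ^ 2 := by rw [ha, ← pow_mul, ← pow_mul']; field_simp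
  rw [hexp, ← hn, ← hk, hneg, zpow_sub₀ hz, zpow_natCast, zpow_natCast]
  simp only [div_pow, mul_pow, neg_neg, pow_mul]
  field_simp

theorem hasSum_centralGaussBinom [TopologicalSpace K] {q z : K} (hq : q ≠ 0) (hz : z ≠ 0)
    (n : ℕ) :
    HasSum (fun j : ℤ => centralGaussBinom (q ^ 2) n j * (q ^ j ^ 2 * z ^ j))
      (qPochhammer (-(q * z)) (q ^ 2) n * qPochhammer (-(q / z)) (q ^ 2) n) := by
  have hinj : Function.Injective fun k : ℕ => (k : ℤ) - n := fun a b h => by simpa using h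
  rw [qPochhammer_mul_qPochhammer_eq_sum hq hz, ← hinj.hasSum_iff]
  · convert hasSum_sum_of_ne_finset_zero (s := range (2 * n + 1))
      (L := .unconditional ℕ) ?_ using 1
    · refine sum_congr rfl fun k hk => ?_
      rw [mem_range] at hk
      simp [centralGaussBinom, show ((k : ℤ) - n).natAbs ≤ n by omega]
    · intro k hk
      rw [mem_range] at hk
      simp [centralGaussBinom, show ¬ ((k : ℤ) - n).natAbs ≤ n by omega]
  · intro j hj
    rw [centralGaussBinom, if_neg, zero_mul]
    exact fun h => hj ⟨(j + n).toNat, by dsimp only; omega⟩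

end FiniteTripleProduct

section InfinitePochhammer

variable {𝕜 : Type*} [NormedField 𝕜] {a q : 𝕜}

/-- The infinite `q`-Pochhammer symbol `(a; q)_∞ = ∏_{k ≥ 0} (1 - aq^k)`, meaningful for
`‖q‖ < 1`. -/
noncomputable def qPochhammerInf (a q : 𝕜) : 𝕜 := ∏' k : ℕ, (1 - a * q ^ k)

theorem one_sub_mul_pow_ne_zero (ha : ‖a‖ < 1) (hq : ‖q‖ < 1) (k : ℕ) : 1 - a * q ^ k ≠ 0 := by
  have hlt : ‖a * q ^ k‖ < 1 := by
    rw [norm_mul, norm_pow]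
    exact mul_lt_one_of_nonneg_of_lt_one_left (norm_nonneg _) ha
      (pow_le_one₀ (norm_nonneg _) hq.le)
  intro h
  rw [← sub_eq_zero.1 h, norm_one] at hlt
  exact lt_irrefl _ hlt

theorem summable_norm_mul_pow (a : 𝕜) (hq : ‖q‖ < 1) : Summable fun k : ℕ => ‖-(a * q ^ k)‖ := by
  simp only [norm_neg, norm_mul, norm_pow]
  exact (summable_geometric_of_lt_one (norm_nonneg _) hq).mul_left _

theorem qPochhammer_ne_zero (ha : ‖a‖ < 1) (hq : ‖q‖ < 1) (n : ℕ) : qPochhammer a q n ≠ 0 :=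
  prod_ne_zero_iff.2 fun k _ => one_sub_mul_pow_ne_zero ha hq k

theorem gaussBinom_add_eq_div (hq : ‖q‖ < 1) (m n : ℕ) :
    gaussBinom q (m + n) m =
      qPochhammer q q (m + n) / (qPochhammer q q m * qPochhammer q q n) :=
  eq_div_of_mul_eq (mul_ne_zero (qPochhammer_ne_zero hq hq m) (qPochhammer_ne_zero hq hq n))
    (gaussBinom_add_mul_qPochhammer q m n)

variable [CompleteSpace 𝕜]

theorem hasProd_qPochhammerInf (a : 𝕜) (hq : ‖q‖ < 1) :
    HasProd (fun k : ℕ => 1 - a * q ^ k) (qPochhammerInf a q) := by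
  simpa only [qPochhammerInf, sub_eq_add_neg] using
    (multipliable_one_add_of_summable (summable_norm_mul_pow a hq)).hasProd

theorem qPochhammerInf_ne_zero (ha : ‖a‖ < 1) (hq : ‖q‖ < 1) : qPochhammerInf a q ≠ 0 := by
  simp only [qPochhammerInf, sub_eq_add_neg]
  exact tprod_one_add_ne_zero_of_summable
    (fun k => by simpa only [sub_eq_add_neg] using one_sub_mul_pow_ne_zero ha hq k)
    (summable_norm_mul_pow a hq)

theorem tendsto_qPochhammer (a : 𝕜) (hq : ‖q‖ < 1) :
    Tendsto (qPochhammer a q) atTop (𝓝 (qPochhammerInf a q)) :=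
  (hasProd_qPochhammerInf a hq).tendsto_prod_nat

theorem tendsto_gaussBinom_add {ι : Type*} {l : Filter ι} {u v : ι → ℕ} (hq : ‖q‖ < 1)
    (hu : Tendsto u l atTop) (hv : Tendsto v l atTop) :
    Tendsto (fun i => gaussBinom q (u i + v i) (u i)) l (𝓝 (qPochhammerInf q q)⁻¹) := by
  have hP := tendsto_qPochhammer q hq
  have hne := qPochhammerInf_ne_zero hq hq
  have h := (hP.comp (hu.atTop_add_atTop hv)).div ((hP.comp hu).mul (hP.comp hv))
    (mul_ne_zero hne hne)
  rw [← div_div, div_self hne, one_div] at h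
  exact h.congr fun i => (gaussBinom_add_eq_div hq _ _).symm

theorem exists_norm_gaussBinom_le (hq : ‖q‖ < 1) : ∃ C, ∀ n k, ‖gaussBinom q n k‖ ≤ C := by
  have hP := tendsto_qPochhammer q hq
  obtain ⟨A, hA⟩ := (Metric.isBounded_range_of_tendsto _ hP).exists_norm_le
  obtain ⟨B, hB⟩ := (Metric.isBounded_range_of_tendsto _
    (hP.inv₀ (qPochhammerInf_ne_zero hq hq))).exists_norm_le
  rw [Set.forall_mem_range] at hA hB
  have hA0 : 0 ≤ A := (norm_nonneg _).trans (hA 0)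
  have hB0 : 0 ≤ B := (norm_nonneg _).trans (hB 0)
  refine ⟨A * (B * B), fun n k => ?_⟩
  rcases lt_or_ge n k with h | h
  · rw [gaussBinom_eq_zero_of_lt q h, norm_zero]
    positivity
  · obtain ⟨m, rfl⟩ := Nat.exists_eq_add_of_le h
    rw [gaussBinom_add_eq_div hq, div_eq_mul_inv, mul_inv, norm_mul, norm_mul]
    exact mul_le_mul (hA _) (mul_le_mul (hB _) (hB _) (norm_nonneg _) hB0) (by positivity) hA0

theorem tendsto_centralGaussBinom (hq : ‖q‖ < 1) (j : ℤ) :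
    Tendsto (fun n => centralGaussBinom q n j) atTop (𝓝 (qPochhammerInf q q)⁻¹) := by
  have hadd : Tendsto (fun n : ℕ => (n + j).toNat) atTop atTop :=
    tendsto_atTop_atTop.2 fun b => ⟨b + j.natAbs, fun n hn => by omega⟩
  have hsub : Tendsto (fun n : ℕ => (n - j).toNat) atTop atTop :=
    tendsto_atTop_atTop.2 fun b => ⟨b + j.natAbs, fun n hn => by omega⟩
  refine (tendsto_gaussBinom_add hq hadd hsub).congr' ?_
  filter_upwards [eventually_ge_atTop j.natAbs] with n hn
  rw [centralGaussBinom, if_pos hn]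
  congr 1
  omega

theorem exists_norm_centralGaussBinom_le (hq : ‖q‖ < 1) :
    ∃ C, ∀ n j, ‖centralGaussBinom q n j‖ ≤ C := by
  obtain ⟨C, hC⟩ := exists_norm_gaussBinom_le hq
  refine ⟨C, fun n j => ?_⟩
  unfold centralGaussBinom
  split_ifs
  · exact hC _ _
  · simpa using (norm_nonneg _).trans (hC 0 0)

end InfinitePochhammer

section Nome

theorem nome_add (z w : ℂ) : nome (z + w) = nome z * nome w := by
  rw [nome, mul_add, Complex.exp_add, nome, nome]

theorem nome_ne_zero (z : ℂ) : nome z ≠ 0 := Complex.exp_ne_zero _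

theorem nome_sub (z w : ℂ) : nome (z - w) = nome z / nome w := by
  rw [eq_div_iff (nome_ne_zero w), ← nome_add, sub_add_cancel]

theorem nome_int_mul (n : ℤ) (z : ℂ) : nome (n * z) = nome z ^ n := by
  rw [nome, nome, ← Complex.exp_int_mul]
  ring_nf

theorem nome_nat_mul (n : ℕ) (z : ℂ) : nome (n * z) = nome z ^ n := by
  exact_mod_cast nome_int_mul n z

theorem nome_half : nome (1 / 2) = -1 := by
  rw [nome, show 2 * Real.pi * I * (1 / 2) = Real.pi * I by ring, Complex.exp_pi_mul_I]

theorem nome_add_half (z : ℂ) : nome (z + 1 / 2) = -nome z := by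
  rw [nome_add, nome_half, mul_neg_one]

theorem nome_sub_half (z : ℂ) : nome (z - 1 / 2) = -nome z := by
  rw [nome_sub, nome_half, div_neg, div_one]

theorem norm_nome_lt_one {τ : ℂ} (hτ : 0 < τ.im) : ‖nome τ‖ < 1 :=
  UpperHalfPlane.norm_exp_two_pi_I_lt_one ⟨τ, hτ⟩

theorem jacobiTheta₂_term_eq_nome (n : ℤ) (z τ : ℂ) :
    jacobiTheta₂_term n z τ = nome (n ^ 2 * (τ / 2) + n * z) := by
  rw [jacobiTheta₂_term, nome]
  ring_nf

end Nome

section TripleProduct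

variable {τ : ℂ}

/-- **Jacobi's triple product identity**, as the limit of its finite form. -/
theorem jacobiTheta₂_eq_qPochhammerInf (z : ℂ) (hτ : 0 < τ.im) :
    jacobiTheta₂ z τ = qPochhammerInf (nome τ) (nome τ) *
      (qPochhammerInf (-nome (τ / 2 + z)) (nome τ) *
        qPochhammerInf (-nome (τ / 2 - z)) (nome τ)) := by
  have hq := norm_nome_lt_one hτ
  have hsq : nome (τ / 2) ^ 2 = nome τ := by
    rw [← nome_nat_mul]
    congr 1
    push_cast
    ring
  have hterm (j : ℤ) :
      nome (τ / 2) ^ j ^ 2 * nome z ^ j = jacobiTheta₂_term j z τ := by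
    rw [jacobiTheta₂_term_eq_nome, nome_add, nome_int_mul, ← nome_int_mul (j ^ 2), Int.cast_pow]
  obtain ⟨C, hC⟩ := exists_norm_centralGaussBinom_le hq
  have hseries : Tendsto
      (fun n : ℕ => ∑' j : ℤ, centralGaussBinom (nome τ) n j * jacobiTheta₂_term j z τ) atTop
      (𝓝 (∑' j : ℤ, (qPochhammerInf (nome τ) (nome τ))⁻¹ * jacobiTheta₂_term j z τ)) :=
    tendsto_tsum_of_dominated_convergence
      ((hasSum_jacobiTheta₂_term z hτ).summable.norm.mul_left C)
      (fun j => (tendsto_centralGaussBinom hq j).mul_const _)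
      (Eventually.of_forall fun n j => by rw [norm_mul]; gcongr; exact hC n j)
  have hprod := (tendsto_qPochhammer (-nome (τ / 2 + z)) hq).mul
    (tendsto_qPochhammer (-nome (τ / 2 - z)) hq)
  have hfinite (n : ℕ) :=
    (hasSum_centralGaussBinom (nome_ne_zero (τ / 2)) (nome_ne_zero z) n).tsum_eq
  simp only [hsq, hterm, ← nome_add, ← nome_sub] at hfinite
  have hlim := tendsto_nhds_unique (hseries.congr hfinite) hprod
  rw [tsum_mul_left] at hlim
  rw [← hlim, mul_inv_cancel_left₀ (qPochhammerInf_ne_zero hq hq), jacobiTheta₂]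

theorem jacobiTheta₂_half_ne_zero (hτ : 0 < τ.im) : jacobiTheta₂ (1 / 2) τ ≠ 0 := by
  have hq := norm_nome_lt_one hτ
  have hhalf : ‖nome (τ / 2)‖ < 1 := norm_nome_lt_one (by simpa using hτ)
  rw [jacobiTheta₂_eq_qPochhammerInf _ hτ, nome_add_half, nome_sub_half, neg_neg]
  have hne := qPochhammerInf_ne_zero hhalf hq
  exact mul_ne_zero (qPochhammerInf_ne_zero hq hq) (mul_ne_zero hne hne)

end TripleProduct

section Addition

variable {τ : ℂ}

theorem bijective_sumElim_add_sub :
    Function.Bijective (Sum.elim (fun p : ℤ × ℤ => (p.1 + p.2, p.1 - p.2))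
      fun p : ℤ × ℤ => (p.1 + p.2 + 1, p.1 - p.2)) := by
  constructor
  · rintro (⟨k₁, l₁⟩ | ⟨k₁, l₁⟩) (⟨k₂, l₂⟩ | ⟨k₂, l₂⟩) h <;>
      simp only [Sum.elim_inl, Sum.elim_inr, Prod.mk.injEq, Sum.inl.injEq, Sum.inr.injEq,
        reduceCtorEq] at h ⊢ <;> omega
  · rintro ⟨m, n⟩
    rcases Int.even_or_odd' (m + n) with ⟨k, hk | hk⟩
    · exact ⟨.inl (k, k - n), by simp only [Sum.elim_inl, Prod.mk.injEq]; omega⟩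
    · exact ⟨.inr (k, k - n), by simp only [Sum.elim_inr, Prod.mk.injEq]; omega⟩

theorem hasSum_jacobiTheta₂_term_mul (z w : ℂ) {σ : ℂ} (hτ : 0 < τ.im) (hσ : 0 < σ.im) :
    HasSum (fun p : ℤ × ℤ => jacobiTheta₂_term p.1 z τ * jacobiTheta₂_term p.2 w σ)
      (jacobiTheta₂ z τ * jacobiTheta₂ w σ) := by
  have hz := ((summable_jacobiTheta₂_term_iff z τ).2 hτ).norm
  have hw := ((summable_jacobiTheta₂_term_iff w σ).2 hσ).norm
  rw [jacobiTheta₂, jacobiTheta₂, tsum_mul_tsum_of_summable_norm hz hw]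
  exact (summable_mul_of_summable_norm hz hw).hasSum

theorem jacobiTheta₂_mul_jacobiTheta₂ (z w : ℂ) (hτ : 0 < τ.im) :
    jacobiTheta₂ z τ * jacobiTheta₂ w τ =
      jacobiTheta₂ (z + w) (2 * τ) * jacobiTheta₂ (z - w) (2 * τ) +
        nome (τ / 2 + z) *
          (jacobiTheta₂ (z + w + τ) (2 * τ) * jacobiTheta₂ (z - w + τ) (2 * τ)) := by
  have h2τ : 0 < (2 * τ).im := by simpa using hτ
  have heven := hasSum_jacobiTheta₂_term_mul (z + w) (z - w) h2τ h2τ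
  have hodd := (hasSum_jacobiTheta₂_term_mul (z + w + τ) (z - w + τ) h2τ h2τ).mul_left
    (nome (τ / 2 + z))
  refine ((Equiv.ofBijective _ bijective_sumElim_add_sub).hasSum_iff.2
    (hasSum_jacobiTheta₂_term_mul z w hτ hτ)).unique (HasSum.sum ?_ ?_)
  · refine heven.congr_fun fun p => ?_
    simp only [Function.comp_apply, Equiv.ofBijective_apply, Sum.elim_inl,
      jacobiTheta₂_term_eq_nome, ← nome_add]
    congr 1
    push_cast
    ring
  · refine hodd.congr_fun fun p => ?_
    simp only [Function.comp_apply, Equiv.ofBijective_apply, Sum.elim_inr,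
      jacobiTheta₂_term_eq_nome, ← nome_add]
    congr 1
    push_cast
    ring

theorem jacobiTheta₂_sub_half (z τ : ℂ) :
    jacobiTheta₂ (z - 1 / 2) τ = jacobiTheta₂ (z + 1 / 2) τ := by
  rw [← jacobiTheta₂_add_left (z - 1 / 2)]
  ring_nf

theorem jacobiTheta₂_neg_add_half (z τ : ℂ) :
    jacobiTheta₂ (-z + 1 / 2) τ = jacobiTheta₂ (z + 1 / 2) τ := by
  rw [← jacobiTheta₂_neg_left, neg_add, neg_neg, ← sub_eq_add_neg, jacobiTheta₂_sub_half]

theorem jacobiTheta₂_mul_jacobiTheta₂_add_half (z : ℂ) (hτ : 0 < τ.im) :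
    jacobiTheta₂ z τ * jacobiTheta₂ (z + 1 / 2) τ =
      jacobiTheta₂ (2 * z + 1 / 2) (2 * τ) * jacobiTheta₂ (1 / 2) (2 * τ) := by
  have h₁ := jacobiTheta₂_mul_jacobiTheta₂ z (z + 1 / 2) hτ
  have h₂ := jacobiTheta₂_mul_jacobiTheta₂ (z + 1 / 2) z hτ
  have hneg (s : ℂ) : jacobiTheta₂ (z - (z + 1 / 2) + s) (2 * τ) =
      jacobiTheta₂ (1 / 2 + s) (2 * τ) := by
    rw [show z - (z + 1 / 2) + s = s - 1 / 2 by ring, jacobiTheta₂_sub_half, add_comm]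
  have hneg₀ := hneg 0
  rw [add_zero, add_zero] at hneg₀
  rw [hneg₀, hneg, ← add_assoc, ← two_mul] at h₁
  rw [add_sub_cancel_left, add_right_comm, ← two_mul, ← add_assoc, nome_add_half] at h₂
  linear_combination (h₁ + h₂) / 2

theorem jacobiTheta₂_mul_add_half_sub (z w : ℂ) (hτ : 0 < τ.im) :
    jacobiTheta₂ z τ * jacobiTheta₂ (w + 1 / 2) τ - jacobiTheta₂ (z + 1 / 2) τ * jacobiTheta₂ w τ =
      2 * nome (τ / 2 + z) *
        (jacobiTheta₂ (z + w + τ + 1 / 2) (2 * τ) * jacobiTheta₂ (z - w + τ + 1 / 2) (2 * τ)) := by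
  have h₁ := jacobiTheta₂_mul_jacobiTheta₂ z (w + 1 / 2) hτ
  have h₂ := jacobiTheta₂_mul_jacobiTheta₂ (z + 1 / 2) w hτ
  rw [← add_assoc, ← sub_sub, sub_add_eq_add_sub _ (1 / 2) τ, jacobiTheta₂_sub_half,
    jacobiTheta₂_sub_half, add_right_comm (z + w)] at h₁
  rw [← add_assoc, nome_add_half, add_right_comm z (1 / 2) w, add_sub_right_comm z (1 / 2) w,
    add_right_comm (z + w), add_right_comm (z - w)] at h₂
  linear_combination h₁ - h₂

theorem jacobiTheta₂_add_half_quadratic_relation (z : ℂ) (hτ : 0 < τ.im) :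
    jacobiTheta₂ (z + 1 / 2) τ ^ 2 * jacobiTheta₂ (1 / 2) (2 * τ) ^ 2 +
        2 * nome (τ / 2 + z) * jacobiTheta₂ (z + 1 / 2) τ * jacobiTheta₂ (1 / 2) τ *
          jacobiTheta₂ (z + τ + 1 / 2) (2 * τ) ^ 2 =
      jacobiTheta₂ (2 * z + 1 / 2) (2 * τ) * jacobiTheta₂ (1 / 2) (2 * τ) *
        jacobiTheta₂ (1 / 2) τ ^ 2 := by
  have hprod := jacobiTheta₂_mul_jacobiTheta₂_add_half z hτ
  have hprod₀ := jacobiTheta₂_mul_jacobiTheta₂_add_half 0 hτ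
  have hsub := jacobiTheta₂_mul_add_half_sub z 0 hτ
  rw [mul_zero, zero_add] at hprod₀
  rw [zero_add, add_zero, sub_zero] at hsub
  linear_combination jacobiTheta₂ (1 / 2) τ ^ 2 * hprod - jacobiTheta₂ (z + 1 / 2) τ ^ 2 * hprod₀ -
    jacobiTheta₂ (z + 1 / 2) τ * jacobiTheta₂ (1 / 2) τ * hsub

end Addition

section CubicContinuedFraction

variable {τ : ℂ}

theorem c_eq_qPochhammerInf (hτ : 0 < τ.im) :
    c τ = nome (τ / 3) *
      (qPochhammerInf (nome τ ^ 5) (nome τ ^ 6) * qPochhammerInf (nome τ) (nome τ ^ 6) /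
        qPochhammerInf (nome τ ^ 3) (nome τ ^ 6) ^ 2) := by
  have hpow {n : ℕ} (hn : n ≠ 0) : ‖nome τ ^ n‖ < 1 := by
    rw [norm_pow]
    exact pow_lt_one₀ (norm_nonneg _) (norm_nome_lt_one hτ) hn
  have h6 := hpow (n := 6) (by norm_num)
  have hnum := (hasProd_qPochhammerInf (nome τ ^ 5) h6).mul (hasProd_qPochhammerInf (nome τ) h6)
  have hden := hasProd_qPochhammerInf (nome τ ^ 3) h6
  have hne := qPochhammerInf_ne_zero (hpow three_ne_zero) h6
  rw [c, sq (qPochhammerInf _ _), ← (hnum.div₀ (hden.mul hden) (mul_ne_zero hne hne)).tprod_eq,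
    nome, mul_div_assoc]
  congr 1
  refine tprod_congr fun n => ?_
  rw [show 6 * (n + 1) - 1 = 5 + 6 * n by omega, show 6 * (n + 1) - 5 = 1 + 6 * n by omega,
    show 6 * (n + 1) - 3 = 3 + 6 * n by omega]
  simp only [pow_add, pow_mul, pow_one, sq]

theorem c_eq_jacobiTheta₂_div (hτ : 0 < τ.im) :
    c τ = nome (τ / 3) *
      (jacobiTheta₂ (2 * τ + 1 / 2) (6 * τ) / jacobiTheta₂ (1 / 2) (6 * τ)) := by
  have h6τ : 0 < (6 * τ).im := by simpa using hτ
  have hq := norm_nome_lt_one h6τ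
  have hpow (n : ℕ) : nome τ ^ n = nome (n * τ) := (nome_nat_mul n τ).symm
  rw [c_eq_qPochhammerInf hτ, jacobiTheta₂_eq_qPochhammerInf _ h6τ,
    jacobiTheta₂_eq_qPochhammerInf _ h6τ, mul_div_mul_left _ _ (qPochhammerInf_ne_zero hq hq),
    ← add_assoc, ← sub_sub, nome_add_half, nome_add_half, nome_sub_half, nome_sub_half,
    show 6 * τ / 2 + 2 * τ = 5 * τ by ring, show 6 * τ / 2 - 2 * τ = τ by ring,
    show 6 * τ / 2 = 3 * τ by ring, hpow, hpow, hpow]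
  simp only [neg_neg, sq, Nat.cast_ofNat]

end CubicContinuedFraction

/-- For `τ` in the upper half-plane, `u = c(τ)` and `v = c(2τ)` satisfy
`u² + 2uv² − v = 0`. -/
theorem cubicCF_modular_relation (τ : ℂ) (hτ : 0 < τ.im) :
    c τ ^ 2 + 2 * c τ * c (2 * τ) ^ 2 - c (2 * τ) = 0 := by
  have h2τ : 0 < (2 * τ).im := by simpa using hτ
  have h6τ : 0 < (6 * τ).im := by simpa using hτ
  have hu := c_eq_jacobiTheta₂_div hτ
  have hv := c_eq_jacobiTheta₂_div h2τ
  have hrel := jacobiTheta₂_add_half_quadratic_relation (-(2 * τ)) h6τ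
  have hcube : nome τ = nome (τ / 3) ^ 3 := by
    rw [← nome_nat_mul, Nat.cast_ofNat, mul_div_cancel₀ τ three_ne_zero]
  have hsq : nome (2 * τ / 3) = nome (τ / 3) ^ 2 := by
    rw [← nome_nat_mul, Nat.cast_ofNat, mul_div_assoc]
  have hb := jacobiTheta₂_half_ne_zero h6τ
  have hβ := jacobiTheta₂_half_ne_zero (τ := 2 * (6 * τ)) (by simpa using hτ)
  rw [mul_neg, jacobiTheta₂_neg_add_half, jacobiTheta₂_neg_add_half,
    show -(2 * τ) + 6 * τ = 2 * (2 * τ) by ring, show 6 * τ / 2 + -(2 * τ) = τ by ring,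
    hcube] at hrel
  rw [hsq, mul_left_comm 6 2 τ] at hv
  rw [hu, hv]
  generalize jacobiTheta₂ (2 * τ + 1 / 2) (6 * τ) = a, jacobiTheta₂ (1 / 2) (6 * τ) = b,
    jacobiTheta₂ (2 * (2 * τ) + 1 / 2) (2 * (6 * τ)) = α,
    jacobiTheta₂ (1 / 2) (2 * (6 * τ)) = β
    at hrel hb hβ ⊢
  field_simp
  linear_combination nome (τ / 3) ^ 2 * hrel
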